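/- Let G=(V,E) be a connected graph, let S ⊆ V, and let 𝒯 be a slim S-nice tree decomposition of G of width k. Let (L^S, X^S, R^S) be an S-trace with L^S ≠ ∅ that occurs in 𝒯, with directed path from the top node t_max to the bottom node t_min; assume t_max has a parent t_p. Write X_max = X_{t_max}, X_p = X_{t_p}, X_min = X_{t_min}, and let X_c be the union of the bags of the S-children of t_min. Assume that every connected component C of G − X_min with V(C) ∩ S = ∅ satisfies V(C) ∩ V_t = ∅ for every S-child t of t_min, and that every connected component C of G − X_p with V(C) ∩ S = ∅ satisfies V(C) ∩ V_t = ∅ for every S-child t of t_p. Define V_L as the set of vertices v with v ∈ L^S ∪ (X_c ∖ X_min) or v connected in G − X_min to some vertex of L^S ∪ (X_c ∖ X_min); let X_path be the union of the vertex sets of the connected components C of G − (X_max ∪ X_p ∪ X_min) with V(C) ∩ S = ∅, N[V(C)] ∩ (X_c ∖ X_min) = ∅ and N(V(C)) ∖ X_p ≠ ∅; and set V_X = X_max ∪ X_p ∪ X_min ∪ X_path. Then V_{t_max} ∪ X_p = V_L ∪ V_X. -/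

import Mathlib

/-! Preliminary definitions: rooted tree decompositions, `S`-traces, `S`-nice and
slim tree decompositions, following Chapelle et al. -/

/-- A walk in `G` all of whose vertices lie in the set `W`. -/
def SimpleGraph.ReachableIn {V : Type} (G : SimpleGraph V) (W : Set V) (u v : V) : Prop :=
  ∃ p : G.Walk u v, ∀ x ∈ p.support, x ∈ W

/-- The open neighborhood of a set of vertices. -/
def SimpleGraph.nbhdSet {V : Type} (G : SimpleGraph V) (W : Set V) : Set V :=
  {x | x ∉ W ∧ ∃ w ∈ W, G.Adj w x}

/-- The vertex set of the connected component of `G − X` that contains `v`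
(assuming `v ∉ X`). -/
def SimpleGraph.compOutside {V : Type} (G : SimpleGraph V) (X : Set V) (v : V) : Set V :=
  {w | G.ReachableIn Xᶜ v w}

/-- A rooted tree decomposition of a graph `G` on vertex type `V`, with node type `ι`.
The rooted tree is given by a parent function: the root is a fixed point of `parent`
and every node reaches the root by iterating `parent`.  The bags satisfy the three
usual conditions of a tree decomposition; connectedness of `{t | v ∈ bag t}` is
expressed by the existence of a highest node `m` containing `v` such that from any
node whose bag contains `v` the whole ancestor chain up to `m` contains `v`. -/
structure RootedTreeDecomp (V ι : Type) (G : SimpleGraph V) where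
  root : ι
  parent : ι → ι
  parent_root : parent root = root
  reaches_root : ∀ t : ι, ∃ n : ℕ, parent^[n] t = root
  bag : ι → Set V
  bags_cover : ∀ v : V, ∃ t : ι, v ∈ bag t
  bags_of_edges : ∀ ⦃u v : V⦄, G.Adj u v → ∃ t : ι, u ∈ bag t ∧ v ∈ bag t
  bags_connected : ∀ v : V, ∃ m : ι, v ∈ bag m ∧
    ∀ t : ι, v ∈ bag t → ∃ n : ℕ, parent^[n] t = m ∧ ∀ i ≤ n, v ∈ bag (parent^[i] t)

namespace RootedTreeDecomp

variable {V ι : Type} {G : SimpleGraph V}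

/-- `t'` lies in the subtree `T_t` rooted at `t`; equivalently, `t` is an
ancestor (possibly equal) of `t'`. -/
def InSubtree (𝒯 : RootedTreeDecomp V ι G) (t t' : ι) : Prop :=
  ∃ n : ℕ, 𝒯.parent^[n] t' = t

/-- `t` is the parent of `t'`. -/
def IsParent (𝒯 : RootedTreeDecomp V ι G) (t t' : ι) : Prop :=
  t' ≠ 𝒯.root ∧ 𝒯.parent t' = t

/-- `V_t`: the union of the bags of the nodes of the subtree rooted at `t`. -/
def Vt (𝒯 : RootedTreeDecomp V ι G) (t : ι) : Set V :=
  {v | ∃ t', 𝒯.InSubtree t t' ∧ v ∈ 𝒯.bag t'}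

/-- `L_t = V_t ∖ X_t`. -/
def Lt (𝒯 : RootedTreeDecomp V ι G) (t : ι) : Set V := 𝒯.Vt t \ 𝒯.bag t

/-- `R_t = V ∖ V_t`. -/
def Rt (𝒯 : RootedTreeDecomp V ι G) (t : ι) : Set V := (𝒯.Vt t)ᶜ

/-- `L_t^S = L_t ∩ S`. -/
def LS (𝒯 : RootedTreeDecomp V ι G) (S : Set V) (t : ι) : Set V := 𝒯.Lt t ∩ S

/-- `X_t^S = X_t ∩ S`. -/
def XS (𝒯 : RootedTreeDecomp V ι G) (S : Set V) (t : ι) : Set V := 𝒯.bag t ∩ S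

/-- `R_t^S = R_t ∩ S`. -/
def RS (𝒯 : RootedTreeDecomp V ι G) (S : Set V) (t : ι) : Set V := 𝒯.Rt t ∩ S

/-- The `S`-trace of a node `t`. -/
def STrace (𝒯 : RootedTreeDecomp V ι G) (S : Set V) (t : ι) : Set V × Set V × Set V :=
  (𝒯.LS S t, 𝒯.XS S t, 𝒯.RS S t)

/-- Every bag has size at most `k + 1`, i.e. the width is at most `k`. -/
def WidthAtMost (𝒯 : RootedTreeDecomp V ι G) (k : ℕ) : Prop :=
  ∀ t : ι, (𝒯.bag t).ncard ≤ k + 1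

/-- The width of the decomposition (max bag size minus one) is exactly `k`. -/
def HasWidth (𝒯 : RootedTreeDecomp V ι G) (k : ℕ) : Prop :=
  𝒯.WidthAtMost k ∧ ∃ t : ι, (𝒯.bag t).ncard = k + 1

/-- `t'` is an `S`-child of `t`. -/
def IsSChild (𝒯 : RootedTreeDecomp V ι G) (S : Set V) (t t' : ι) : Prop :=
  𝒯.IsParent t t' ∧ ((𝒯.LS S t' ∪ 𝒯.XS S t') \ (𝒯.RS S t ∪ 𝒯.XS S t)).Nonempty

/-- `t` is an `S`-bottom node: `L_t^S ≠ ∅` and `t` is the bottom node of the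
directed path of its own `S`-trace (every node with the same `S`-trace is an
ancestor of `t`). -/
def IsSBottom (𝒯 : RootedTreeDecomp V ι G) (S : Set V) (t : ι) : Prop :=
  (𝒯.LS S t).Nonempty ∧ ∀ t', 𝒯.STrace S t' = 𝒯.STrace S t → 𝒯.InSubtree t' t

/-- `t` admits the `S`-operation `introduce(v)`. -/
def AdmitsIntroduce (𝒯 : RootedTreeDecomp V ι G) (S : Set V) (t : ι) (v : V) : Prop :=
  ∃ t₁, 𝒯.IsSChild S t t₁ ∧ (∀ t₂, 𝒯.IsSChild S t t₂ → t₂ = t₁) ∧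
    v ∈ S ∧ v ∉ 𝒯.bag t₁ ∧ 𝒯.XS S t = 𝒯.XS S t₁ ∪ {v}

/-- `t` admits the `S`-operation `forget(v)`. -/
def AdmitsForget (𝒯 : RootedTreeDecomp V ι G) (S : Set V) (t : ι) (v : V) : Prop :=
  ∃ t₁, 𝒯.IsSChild S t t₁ ∧ (∀ t₂, 𝒯.IsSChild S t t₂ → t₂ = t₁) ∧
    v ∈ S ∧ v ∈ 𝒯.bag t₁ ∧ 𝒯.XS S t = 𝒯.XS S t₁ \ {v}

/-- `t` admits the `S`-operation `join` with the two `S`-children `t₁, t₂`. -/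
def AdmitsJoin (𝒯 : RootedTreeDecomp V ι G) (S : Set V) (t t₁ t₂ : ι) : Prop :=
  t₁ ≠ t₂ ∧ 𝒯.IsSChild S t t₁ ∧ 𝒯.IsSChild S t t₂ ∧
    (∀ t₃, 𝒯.IsSChild S t t₃ → t₃ = t₁ ∨ t₃ = t₂) ∧
    𝒯.XS S t₁ ∪ 𝒯.XS S t₂ ⊆ 𝒯.XS S t

/-- `S`-nice tree decomposition: bags along tree edges are comparable and differ in
size by at most one, and every `S`-bottom node admits one of the `S`-operations. -/
def IsSNice (𝒯 : RootedTreeDecomp V ι G) (S : Set V) : Prop :=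
  (∀ t t' : ι, 𝒯.IsParent t' t →
      (𝒯.bag t ⊆ 𝒯.bag t' ∨ 𝒯.bag t' ⊆ 𝒯.bag t) ∧
      (𝒯.bag t).ncard ≤ (𝒯.bag t').ncard + 1 ∧ (𝒯.bag t').ncard ≤ (𝒯.bag t).ncard + 1) ∧
  ∀ t : ι, 𝒯.IsSBottom S t →
    (∃ v, 𝒯.AdmitsIntroduce S t v) ∨ (∃ v, 𝒯.AdmitsForget S t v) ∨
      (∃ t₁ t₂, 𝒯.AdmitsJoin S t t₁ t₂)

/-- Nice tree decomposition: root and leaves have empty bags, and every internal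
node is an introduce, forget, or join node. -/
def IsNice (𝒯 : RootedTreeDecomp V ι G) : Prop :=
  𝒯.bag 𝒯.root = ∅ ∧
  (∀ t : ι, (∀ t', ¬𝒯.IsParent t t') → 𝒯.bag t = ∅) ∧
  ∀ t : ι, (∃ t', 𝒯.IsParent t t') →
    (∃ t', 𝒯.IsParent t t' ∧ (∀ t'', 𝒯.IsParent t t'' → t'' = t') ∧
      ((∃ v, v ∉ 𝒯.bag t' ∧ 𝒯.bag t = 𝒯.bag t' ∪ {v}) ∨
        (∃ v, v ∈ 𝒯.bag t' ∧ 𝒯.bag t = 𝒯.bag t' \ {v}))) ∨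
    (∃ t₁ t₂, t₁ ≠ t₂ ∧ 𝒯.IsParent t t₁ ∧ 𝒯.IsParent t t₂ ∧
      (∀ t₃, 𝒯.IsParent t t₃ → t₃ = t₁ ∨ t₃ = t₂) ∧
      𝒯.bag t = 𝒯.bag t₁ ∧ 𝒯.bag t = 𝒯.bag t₂)

/-- A set of nodes inducing a connected subtree of the tree: it contains a node `m`
such that from every node of the set the whole ancestor chain up to `m` stays in
the set. -/
def ConnectedNodeSet (𝒯 : RootedTreeDecomp V ι G) (A : Set ι) : Prop :=
  ∃ m ∈ A, ∀ t ∈ A, ∃ n : ℕ, 𝒯.parent^[n] t = m ∧ ∀ i ≤ n, 𝒯.parent^[i] t ∈ A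

/-- A full join tree: a non-trivial inclusion-maximal connected set of nodes all of
which share one and the same full bag `X` (of size `k + 1`). -/
def IsFullJoinTree (𝒯 : RootedTreeDecomp V ι G) (k : ℕ) (A : Set ι) (X : Set V) : Prop :=
  A.Nontrivial ∧ 𝒯.ConnectedNodeSet A ∧ X.ncard = k + 1 ∧ (∀ t ∈ A, 𝒯.bag t = X) ∧
  ∀ A' : Set ι, A ⊆ A' → 𝒯.ConnectedNodeSet A' → (∀ t ∈ A', 𝒯.bag t = X) → A' = A

/-- `m` is the root (top node) of the node set `A`. -/
def IsTopOf (𝒯 : RootedTreeDecomp V ι G) (A : Set ι) (m : ι) : Prop :=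
  m ∈ A ∧ ∀ t ∈ A, 𝒯.InSubtree m t

/-- The condition on a pair `(u, ti)` appearing in condition (7) of slimness:
either `ti` belongs to `T'_C` (it is an `S`-child of a node of the full join tree
`A` but is not itself in `A`) and `u ∈ V_{ti}`, or `ti` is the parent of the root
`tr` of the full join tree and `u ∈ V ∖ V_{tr}`. -/
def FullJoinBranch (𝒯 : RootedTreeDecomp V ι G) (S : Set V) (A : Set ι) (tr : ι)
    (u : V) (ti : ι) : Prop :=
  (ti ∉ A ∧ (∃ ta ∈ A, 𝒯.IsSChild S ta ti) ∧ u ∈ 𝒯.Vt ti) ∨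
  (tr ≠ 𝒯.root ∧ ti = 𝒯.parent tr ∧ u ∉ 𝒯.Vt tr)

/-- Slim `S`-nice tree decomposition of width `k` (the seven conditions of the
paper; a bag is *full* if it has size `k + 1`). -/
def IsSlim (𝒯 : RootedTreeDecomp V ι G) (S : Set V) (k : ℕ) : Prop :=
  -- (1) the root is not an S-bottom node
  (¬𝒯.IsSBottom S 𝒯.root) ∧
  -- (2) S-bottom nodes with two S-children
  (∀ t t₁ t₂ : ι, 𝒯.IsSBottom S t → t₁ ≠ t₂ → 𝒯.IsSChild S t t₁ → 𝒯.IsSChild S t t₂ →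
    (∃ A X, 𝒯.IsFullJoinTree k A X ∧ t ∈ A) ∨
      ((𝒯.bag t₁).ncard ≠ k + 1 ∧ (𝒯.bag t₂).ncard ≠ k + 1 ∧
        (𝒯.bag t₁).ncard ≤ (𝒯.bag t).ncard ∧ (𝒯.bag t₂).ncard ≤ (𝒯.bag t).ncard ∧
        ∀ tp, 𝒯.IsParent tp t →
          (𝒯.bag tp).ncard ≠ k + 1 ∧ (𝒯.bag tp).ncard ≤ (𝒯.bag t).ncard)) ∧
  -- (3) S-bottom nodes with a non-full bag
  (∀ t tp : ι, 𝒯.IsSBottom S t → (𝒯.bag t).ncard ≠ k + 1 → 𝒯.IsParent tp t →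
    𝒯.bag t = 𝒯.bag tp ∧ ∀ t'', 𝒯.IsSChild S tp t'' → t'' = t) ∧
  -- (4) S-bottom nodes admitting forget(v)
  (∀ t v t', 𝒯.IsSBottom S t → 𝒯.AdmitsForget S t v → 𝒯.IsSChild S t t' →
    (𝒯.bag t').ncard ≠ k + 1 →
    (∀ t₁ t₂, 𝒯.IsSChild S t' t₁ → 𝒯.IsSChild S t' t₂ → t₁ = t₂) ∧
      ∀ t'', 𝒯.IsSChild S t' t'' → 𝒯.bag t' = 𝒯.bag t'') ∧
  -- (5) parents of S-bottom nodes with non-full bags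
  (∀ t tp, 𝒯.IsSBottom S t → 𝒯.IsParent tp t → (𝒯.bag tp).ncard ≠ k + 1 →
    tp = 𝒯.root ∨ ∀ tpp, 𝒯.IsParent tpp tp → ¬𝒯.IsSBottom S tpp) ∧
  -- (6) nodes of full join trees
  (∀ A X, 𝒯.IsFullJoinTree k A X → ∀ t ∈ A,
    𝒯.IsSBottom S t ∧ ∃ t₁ t₂, t₁ ≠ t₂ ∧ 𝒯.IsSChild S t t₁ ∧ 𝒯.IsSChild S t t₂) ∧
  -- (7) branching condition of full join trees
  (∀ A X tr, 𝒯.IsFullJoinTree k A X → 𝒯.IsTopOf A tr →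
    ∀ v ∈ X \ S, ∃ u₁ u₂ u₃ : V, ∃ t₁ t₂ t₃ : ι,
      u₁ ≠ u₂ ∧ u₁ ≠ u₃ ∧ u₂ ≠ u₃ ∧ t₁ ≠ t₂ ∧ t₁ ≠ t₃ ∧ t₂ ≠ t₃ ∧
      (G.Adj v u₁ ∧ u₁ ∉ X ∧ (∃ s ∈ S, G.ReachableIn Xᶜ u₁ s) ∧
        𝒯.FullJoinBranch S A tr u₁ t₁) ∧
      (G.Adj v u₂ ∧ u₂ ∉ X ∧ (∃ s ∈ S, G.ReachableIn Xᶜ u₂ s) ∧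
        𝒯.FullJoinBranch S A tr u₂ t₂) ∧
      (G.Adj v u₃ ∧ u₃ ∉ X ∧ (∃ s ∈ S, G.ReachableIn Xᶜ u₃ s) ∧
        𝒯.FullJoinBranch S A tr u₃ t₃))

end RootedTreeDecomp

/-- `tw(G) ≤ k`: `G` admits a (rooted) tree decomposition of width at most `k`. -/
def SimpleGraph.TreewidthAtMost {V : Type} (G : SimpleGraph V) (k : ℕ) : Prop :=
  ∃ (ι : Type) (𝒯 : RootedTreeDecomp V ι G), 𝒯.WidthAtMost k

/-! A vertex of `V_t` missing from `bag t` or from `bag (parent t)` lies only in bags of the subtree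
at `t`, so all its neighbours are in `V_t`. Hence every component of `G − X` with `bag t ⊆ X` that
meets `V_t` stays in `V_t`, and likewise, with `Y = X_max ∪ X_p ∪ X_min`, every component of `G − Y`
that has a neighbour in `Y \ X_p` stays in `V_{tmax}`; these two facts give `⊇`. Conversely, take
`v ∈ V_{tmax}` outside `V_L ∪ Y` and let `C` be its component in `G − Y`. As the two traces agree,
the vertices of `S` in `V_{tmax} \ X_min` belong to `L^S`, so `C` avoids `S` because `v ∉ V_L`. If
all neighbours of `C` were in `X_p`, then `C` would contain the component of `v` in `G − X_p`, an
`S`-free component that meets `V_{tmax}`, which the assumption at `t_p` forbids. -/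

section Reachability

variable {V : Type} {G : SimpleGraph V} {W W' X Y C : Set V} {u v w : V}

theorem reachableIn_refl (hu : u ∈ W) : G.ReachableIn W u u :=
  ⟨.nil, by simpa using hu⟩

theorem reachableIn_symm (h : G.ReachableIn W u v) : G.ReachableIn W v u := by
  obtain ⟨p, hp⟩ := h
  exact ⟨p.reverse, fun x hx => hp x (by simpa using hx)⟩

theorem reachableIn_mono (hW : W ⊆ W') (h : G.ReachableIn W u v) : G.ReachableIn W' u v := by
  obtain ⟨p, hp⟩ := h
  exact ⟨p, fun x hx => hW (hp x hx)⟩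

theorem reachableIn_concat (h : G.ReachableIn W u v) (hvw : G.Adj v w) (hw : w ∈ W) :
    G.ReachableIn W u w := by
  obtain ⟨p, hp⟩ := h
  refine ⟨p.concat hvw, fun x hx => ?_⟩
  rw [SimpleGraph.Walk.support_concat, List.mem_append, List.mem_singleton] at hx
  rcases hx with hx | rfl
  exacts [hp x hx, hw]

theorem mem_of_reachableIn (h : G.ReachableIn W u v) : v ∈ W := by
  obtain ⟨p, hp⟩ := h
  exact hp v p.end_mem_support

theorem mem_of_reachableIn_of_adj_closed
    (hC : ∀ ⦃x y⦄, x ∈ C → x ∈ W → y ∈ W → G.Adj x y → y ∈ C)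
    (h : G.ReachableIn W u v) (hu : u ∈ C) : v ∈ C := by
  obtain ⟨p, hp⟩ := h
  induction p with
  | nil => exact hu
  | cons hadj p ih =>
    simp only [SimpleGraph.Walk.support_cons, List.forall_mem_cons] at hp
    exact ih (hC hu hp.1 (hp.2 _ p.start_mem_support) hadj) hp.2

theorem nbhdSet_compOutside_subset : G.nbhdSet (G.compOutside X v) ⊆ X := by
  rintro x ⟨hxC, w, hw, hwx⟩
  by_contra hxX
  exact hxC (reachableIn_concat hw hwx hxX)

theorem compOutside_subset_of_nbhdSet_subset (hC : G.nbhdSet C ⊆ X) (hv : v ∈ C) :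
    G.compOutside X v ⊆ C := by
  refine fun w hw => mem_of_reachableIn_of_adj_closed (fun x y hx _ hy hxy => ?_) hw hv
  by_contra hyC
  exact hy (hC ⟨hyC, x, hx, hxy⟩)

end Reachability

namespace RootedTreeDecomp

variable {V ι : Type} {G : SimpleGraph V} {𝒯 : RootedTreeDecomp V ι G}
  {S X Y : Set V} {t t' t₀ tmin tmax tp : ι} {u v w : V}

theorem bag_subset_Vt : 𝒯.bag t ⊆ 𝒯.Vt t :=
  fun _ hv => ⟨t, ⟨0, rfl⟩, hv⟩

theorem inSubtree_trans (h : 𝒯.InSubtree t t') (h' : 𝒯.InSubtree t' t₀) : 𝒯.InSubtree t t₀ := by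
  obtain ⟨a, rfl⟩ := h
  obtain ⟨b, rfl⟩ := h'
  exact ⟨a + b, Function.iterate_add_apply _ a b t₀⟩

theorem Vt_subset_of_inSubtree (h : 𝒯.InSubtree t t') : 𝒯.Vt t' ⊆ 𝒯.Vt t :=
  fun _ ⟨s, hs, hv⟩ => ⟨s, inSubtree_trans h hs, hv⟩

theorem not_inSubtree_parent (ht : t ≠ 𝒯.root) : ¬𝒯.InSubtree t (𝒯.parent t) := by
  rintro ⟨n, hn⟩
  obtain ⟨r, hr⟩ := 𝒯.reaches_root t
  have hcycle : 𝒯.parent^[(n + 1) * r] t = t := by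
    rw [Function.iterate_mul]
    exact Function.iterate_fixed hn r
  have hroot : 𝒯.parent^[(n + 1) * r] t = 𝒯.root := by
    rw [Nat.succ_mul, Function.iterate_add_apply, hr]
    exact Function.iterate_fixed 𝒯.parent_root _
  exact ht (hcycle.symm.trans hroot)

/- If the top node `m` of the bags containing `v` were strictly above `t`, then `v` would be in both
`bag t` and `bag (parent t)`. -/
theorem inSubtree_of_mem_bag (hv : v ∈ 𝒯.Vt t) (hvs : v ∈ 𝒯.bag t₀)
    (hvt : v ∉ 𝒯.bag t ∩ 𝒯.bag (𝒯.parent t)) : 𝒯.InSubtree t t₀ := by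
  obtain ⟨s, ⟨a, rfl⟩, hs⟩ := hv
  obtain ⟨m, -, htop⟩ := 𝒯.bags_connected v
  obtain ⟨n, rfl, hchain⟩ := htop s hs
  obtain ⟨b, hb, -⟩ := htop t₀ hvs
  have hna : n ≤ a := by
    by_contra! han
    refine hvt ⟨hchain a han.le, ?_⟩
    rw [← Function.iterate_succ_apply' 𝒯.parent a s]
    exact hchain (a + 1) han
  refine ⟨a - n + b, ?_⟩
  rw [Function.iterate_add_apply, hb, ← Function.iterate_add_apply, Nat.sub_add_cancel hna]

theorem mem_Vt_of_adj (hu : u ∈ 𝒯.Vt t) (hut : u ∉ 𝒯.bag t ∩ 𝒯.bag (𝒯.parent t))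
    (huw : G.Adj u w) : w ∈ 𝒯.Vt t := by
  obtain ⟨s, hus, hws⟩ := 𝒯.bags_of_edges huw
  exact ⟨s, inSubtree_of_mem_bag hu hus hut, hws⟩

theorem compOutside_subset_Vt (hX : 𝒯.bag t ⊆ X) (hv : v ∈ 𝒯.Vt t) :
    G.compOutside X v ⊆ 𝒯.Vt t :=
  fun _ hw => mem_of_reachableIn_of_adj_closed (W := Xᶜ)
    (fun _ _ hx hxX _ hxy => mem_Vt_of_adj hx (fun h => hxX (hX h.1)) hxy) hw hv

theorem isSChild_of_LS_nonempty (hp : 𝒯.IsParent tp t) (hL : (𝒯.LS S t).Nonempty) :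
    𝒯.IsSChild S tp t := by
  obtain ⟨v, ⟨hvt, hvb⟩, hvS⟩ := hL
  obtain ⟨hroot, rfl⟩ := hp
  refine ⟨⟨hroot, rfl⟩, v, Or.inl ⟨⟨hvt, hvb⟩, hvS⟩, ?_⟩
  rintro (hR | hX)
  · exact hR.1 (Vt_subset_of_inSubtree ⟨1, rfl⟩ hvt)
  · exact not_inSubtree_parent hroot (inSubtree_of_mem_bag hvt hX.1 fun h => hvb h.1)

theorem mem_LS_of_STrace_eq (h : 𝒯.STrace S t = 𝒯.STrace S t') (hv : v ∈ S)
    (hvt : v ∈ 𝒯.Vt t) (hvt' : v ∉ 𝒯.bag t') : v ∈ 𝒯.LS S t' := by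
  simp only [STrace, Prod.mk.injEq] at h
  obtain ⟨hLS, hXS, -⟩ := h
  have hvb : v ∉ 𝒯.bag t := fun hb => hvt' (hXS.subset ⟨hb, hv⟩).1
  exact hLS.subset ⟨⟨hvt, hvb⟩, hv⟩

/-- The set `X_c`: the union of the bags of the `S`-children of `t`. -/
def sChildBags (𝒯 : RootedTreeDecomp V ι G) (S : Set V) (t : ι) : Set V :=
  {u | ∃ t', 𝒯.IsSChild S t t' ∧ u ∈ 𝒯.bag t'}

/-- The set `L_t^S ∪ (X_c ∖ X_t)` of vertices from which `leftSet` is grown. -/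
def leftSeed (𝒯 : RootedTreeDecomp V ι G) (S : Set V) (t : ι) : Set V :=
  𝒯.LS S t ∪ (𝒯.sChildBags S t \ 𝒯.bag t)

/-- The set `V_L`: the vertices in, or connected in `G − X_t` to, `L_t^S ∪ (X_c ∖ X_t)`. -/
def leftSet (𝒯 : RootedTreeDecomp V ι G) (S : Set V) (t : ι) : Set V :=
  {v | v ∈ 𝒯.leftSeed S t ∨ ∃ u ∈ 𝒯.leftSeed S t, G.ReachableIn (𝒯.bag t)ᶜ v u}

/-- The separator `X_max ∪ X_p ∪ X_min`. -/
def pathBags (𝒯 : RootedTreeDecomp V ι G) (tmin tmax tp : ι) : Set V :=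
  𝒯.bag tmax ∪ 𝒯.bag tp ∪ 𝒯.bag tmin

/-- The set `X_path`: the union of the components `C` of `G − (X_max ∪ X_p ∪ X_min)` that avoid
`S`, whose closed neighbourhood avoids `X_c ∖ X_min`, and that have a neighbour outside `X_p`. A
component is given by a vertex `v` in it, as `G.compOutside _ v`. -/
def pathVertices (𝒯 : RootedTreeDecomp V ι G) (S : Set V) (tmin tmax tp : ι) : Set V :=
  {v | v ∉ 𝒯.pathBags tmin tmax tp ∧ G.compOutside (𝒯.pathBags tmin tmax tp) v ∩ S = ∅ ∧
    (G.compOutside (𝒯.pathBags tmin tmax tp) v ∪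
        G.nbhdSet (G.compOutside (𝒯.pathBags tmin tmax tp) v)) ∩
      (𝒯.sChildBags S tmin \ 𝒯.bag tmin) = ∅ ∧
    (G.nbhdSet (G.compOutside (𝒯.pathBags tmin tmax tp) v) \ 𝒯.bag tp).Nonempty}

theorem bag_max_subset_pathBags : 𝒯.bag tmax ⊆ 𝒯.pathBags tmin tmax tp :=
  fun _ h => Or.inl (Or.inl h)

theorem bag_parent_subset_pathBags : 𝒯.bag tp ⊆ 𝒯.pathBags tmin tmax tp :=
  fun _ h => Or.inl (Or.inr h)

theorem bag_min_subset_pathBags : 𝒯.bag tmin ⊆ 𝒯.pathBags tmin tmax tp :=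
  fun _ h => Or.inr h

theorem leftSeed_subset_Lt : 𝒯.leftSeed S t ⊆ 𝒯.Lt t := by
  rintro u (hu | ⟨⟨t', ht', hut'⟩, hut⟩)
  · exact hu.1
  · exact ⟨⟨t', ⟨1, ht'.1.2⟩, hut'⟩, hut⟩

theorem leftSet_subset_Vt : 𝒯.leftSet S t ⊆ 𝒯.Vt t := by
  rintro v (hv | ⟨u, hu, hvu⟩)
  · exact (leftSeed_subset_Lt hv).1
  · exact compOutside_subset_Vt subset_rfl (leftSeed_subset_Lt hu).1 (reachableIn_symm hvu)

theorem disjoint_compOutside_union_nbhdSet_leftSeed (hY : 𝒯.bag t ⊆ Y)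
    (hv : v ∉ 𝒯.leftSet S t) :
    Disjoint (G.compOutside Y v ∪ G.nbhdSet (G.compOutside Y v)) (𝒯.leftSeed S t) := by
  have hmono : ∀ {x}, x ∈ G.compOutside Y v → G.ReachableIn (𝒯.bag t)ᶜ v x :=
    reachableIn_mono (Set.compl_subset_compl.mpr hY)
  refine Set.disjoint_left.mpr fun x hx hseed => hv (Or.inr ⟨x, hseed, ?_⟩)
  rcases hx with hx | ⟨-, w, hw, hwx⟩
  · exact hmono hx
  · exact reachableIn_concat (hmono hw) hwx (leftSeed_subset_Lt hseed).2

theorem compOutside_inter_eq_empty (htr : 𝒯.STrace S tmax = 𝒯.STrace S tmin)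
    (hmax : 𝒯.bag tmax ⊆ Y) (hmin : 𝒯.bag tmin ⊆ Y)
    (hv : v ∈ 𝒯.Vt tmax) (hvL : v ∉ 𝒯.leftSet S tmin) : G.compOutside Y v ∩ S = ∅ := by
  refine Set.eq_empty_of_forall_notMem fun s ⟨hs, hsS⟩ => ?_
  have hsL : s ∈ 𝒯.LS S tmin :=
    mem_LS_of_STrace_eq htr hsS (compOutside_subset_Vt hmax hv hs)
      fun h => mem_of_reachableIn hs (hmin h)
  exact Set.disjoint_left.mp (disjoint_compOutside_union_nbhdSet_leftSeed hmin hvL)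
    (Or.inl hs) (Or.inl hsL)

theorem pathBags_subset (hsub : 𝒯.InSubtree tmax tmin) :
    𝒯.pathBags tmin tmax tp ⊆ 𝒯.Vt tmax ∪ 𝒯.bag tp := by
  rintro v ((hv | hv) | hv)
  exacts [Or.inl (bag_subset_Vt hv), Or.inr hv,
    Or.inl (Vt_subset_of_inSubtree hsub (bag_subset_Vt hv))]

theorem pathVertices_subset_Vt (hsub : 𝒯.InSubtree tmax tmin) (hp : 𝒯.IsParent tp tmax) :
    𝒯.pathVertices S tmin tmax tp ⊆ 𝒯.Vt tmax := by
  obtain ⟨-, rfl⟩ := hp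
  rintro v ⟨-, -, -, x, hx, hxp⟩
  have hxV : x ∈ 𝒯.Vt tmax :=
    (pathBags_subset hsub (nbhdSet_compOutside_subset hx)).resolve_right hxp
  obtain ⟨-, w, hw, hwx⟩ := hx
  have hwV : w ∈ 𝒯.Vt tmax := mem_Vt_of_adj hxV (fun h => hxp h.2) hwx.symm
  exact compOutside_subset_Vt bag_max_subset_pathBags hwV (reachableIn_symm hw)

theorem mem_pathVertices (htr : 𝒯.STrace S tmax = 𝒯.STrace S tmin)
    (hFp : ∀ v ∉ 𝒯.bag tp, G.compOutside (𝒯.bag tp) v ∩ S = ∅ → v ∉ 𝒯.Vt tmax)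
    (hv : v ∈ 𝒯.Vt tmax) (hvL : v ∉ 𝒯.leftSet S tmin) (hvY : v ∉ 𝒯.pathBags tmin tmax tp) :
    v ∈ 𝒯.pathVertices S tmin tmax tp := by
  have hCS : G.compOutside (𝒯.pathBags tmin tmax tp) v ∩ S = ∅ :=
    compOutside_inter_eq_empty htr bag_max_subset_pathBags bag_min_subset_pathBags hv hvL
  have hCX := disjoint_compOutside_union_nbhdSet_leftSeed
    (bag_min_subset_pathBags (tmax := tmax) (tp := tp)) hvL
  refine ⟨hvY, hCS, (hCX.mono_right Set.subset_union_right).inter_eq, ?_⟩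
  by_contra hN
  rw [Set.not_nonempty_iff_eq_empty, Set.sdiff_eq_empty] at hN
  refine hFp v (fun h => hvY (bag_parent_subset_pathBags h)) ?_ hv
  exact Set.subset_empty_iff.mp <| hCS ▸ Set.inter_subset_inter_left S
    (compOutside_subset_of_nbhdSet_subset hN (reachableIn_refl hvY))

end RootedTreeDecomp

open RootedTreeDecomp in
theorem statement17_general {V ι : Type} {G : SimpleGraph V} (𝒯 : RootedTreeDecomp V ι G)
    (S : Set V) {tmin tmax tp : ι} (hsub : 𝒯.InSubtree tmax tmin)
    (htr : 𝒯.STrace S tmax = 𝒯.STrace S tmin) (hp : 𝒯.IsParent tp tmax)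
    (hFp : ∀ v ∉ 𝒯.bag tp, G.compOutside (𝒯.bag tp) v ∩ S = ∅ → v ∉ 𝒯.Vt tmax) :
    𝒯.Vt tmax ∪ 𝒯.bag tp =
      𝒯.leftSet S tmin ∪ (𝒯.pathBags tmin tmax tp ∪ 𝒯.pathVertices S tmin tmax tp) := by
  apply Set.Subset.antisymm
  · rintro v (hv | hv)
    · by_cases hvL : v ∈ 𝒯.leftSet S tmin
      · exact Or.inl hvL
      by_cases hvY : v ∈ 𝒯.pathBags tmin tmax tp
      · exact Or.inr (Or.inl hvY)
      exact Or.inr (Or.inr (mem_pathVertices htr hFp hv hvL hvY))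
    · exact Or.inr (Or.inl (bag_parent_subset_pathBags hv))
  · refine Set.union_subset ?_ (Set.union_subset (pathBags_subset hsub) ?_)
    · exact (leftSet_subset_Vt.trans (Vt_subset_of_inSubtree hsub)).trans Set.subset_union_left
    · exact (pathVertices_subset_Vt hsub hp).trans Set.subset_union_left

/-- (Corollary `lem:legal0` of the paper.)  In the setting of
Statements 15 and 16, `V_{tmax} ∪ X_p = V_L ∪ V_X`. -/
theorem statement17 {V ι : Type} [Fintype V] [DecidableEq V] {G : SimpleGraph V}
    (hconn : G.Connected) (S : Set V) (k : ℕ)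
    (𝒯 : RootedTreeDecomp V ι G)
    (hnice : 𝒯.IsSNice S) (hslim : 𝒯.IsSlim S k) (hw : 𝒯.HasWidth k)
    (tmin tmax tp : ι)
    (hL : (𝒯.LS S tmin).Nonempty)
    (hbot : ∀ t', 𝒯.STrace S t' = 𝒯.STrace S tmin → 𝒯.InSubtree t' tmin)
    (htr : 𝒯.STrace S tmax = 𝒯.STrace S tmin)
    (htop : ∀ t', 𝒯.STrace S t' = 𝒯.STrace S tmin → 𝒯.InSubtree tmax t')
    (hp : 𝒯.IsParent tp tmax)
    (hFmin : ∀ v, v ∉ 𝒯.bag tmin → G.compOutside (𝒯.bag tmin) v ∩ S = ∅ →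
      ∀ t, 𝒯.IsSChild S tmin t → v ∉ 𝒯.Vt t)
    (hFp : ∀ v, v ∉ 𝒯.bag tp → G.compOutside (𝒯.bag tp) v ∩ S = ∅ →
      ∀ t, 𝒯.IsSChild S tp t → v ∉ 𝒯.Vt t)
    (Xc Y Xpath VX VL : Set V)
    (hXc : Xc = {u | ∃ t, 𝒯.IsSChild S tmin t ∧ u ∈ 𝒯.bag t})
    (hY : Y = 𝒯.bag tmax ∪ 𝒯.bag tp ∪ 𝒯.bag tmin)
    (hXpath : Xpath = {v | v ∉ Y ∧ G.compOutside Y v ∩ S = ∅ ∧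
      (G.compOutside Y v ∪ G.nbhdSet (G.compOutside Y v)) ∩ (Xc \ 𝒯.bag tmin) = ∅ ∧
      (G.nbhdSet (G.compOutside Y v) \ 𝒯.bag tp).Nonempty})
    (hVX : VX = Y ∪ Xpath)
    (hVL : VL = {v | v ∈ 𝒯.LS S tmin ∪ (Xc \ 𝒯.bag tmin) ∨
      ∃ u ∈ 𝒯.LS S tmin ∪ (Xc \ 𝒯.bag tmin), G.ReachableIn (𝒯.bag tmin)ᶜ v u}) :
    𝒯.Vt tmax ∪ 𝒯.bag tp = VL ∪ VX := by
  subst hXc hY hXpath hVX hVL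
  exact statement17_general 𝒯 S (htop tmin rfl) htr hp fun v hv hC =>
    hFp v hv hC tmax (RootedTreeDecomp.isSChild_of_LS_nonempty hp ((Prod.mk.inj htr).1 ▸ hL))
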